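/- arXiv:2110.13886 — 2 statements merged into one kernel-verified Lean document; each statement's English description precedes it below -/
import Mathlib

section
/- For every integer e ≥ 1, the abelianization of the presented group G_e = ⟨x, y ∣ x^{3^{e+1}} = 1, y^3 = 1, [y,x] = x^{3^e}⟩ is isomorphic to (ZMod (3^e)) × (ZMod 3). -/
/-- Relations of `G_e = ⟨x, y ∣ x^(3^(e+1)) = 1, y^3 = 1, [y,x] = x^(3^e)⟩`,
with `[a,b] = a⁻¹ * b⁻¹ * a * b`, generators `x = of 0`, `y = of 1`. -/
def Grels (e : ℕ) : Set (FreeGroup (Fin 2)) :=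
  {FreeGroup.of 0 ^ 3 ^ (e + 1), FreeGroup.of 1 ^ 3,
   (FreeGroup.of 1)⁻¹ * (FreeGroup.of 0)⁻¹ * FreeGroup.of 1 * FreeGroup.of 0 *
     (FreeGroup.of 0 ^ 3 ^ e)⁻¹}

/-! For `⟨x, y ∣ x ^ k = 1, y ^ m = 1, [y, x] = x ^ n⟩`, a homomorphism from the abelianization to
a commutative group `A` is a pair `(x, y)` in `A` satisfying the relations. In `A` the commutator
relation reads `x ^ n = 1`, so together with `x ^ k = 1` it says `x ^ gcd k n = 1`. Thus the
abelianization has the universal property of `ℤ/gcd(k, n) × ℤ/m`. -/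

section ZModHoms

variable {n m : ℕ}

theorem ofAdd_one_pow_self : Multiplicative.ofAdd (1 : ZMod n) ^ n = 1 := by
  rw [← ofAdd_nsmul, nsmul_one, ZMod.natCast_self, ofAdd_zero]

theorem ofAdd_intCast_zmod (k : ℤ) :
    Multiplicative.ofAdd (k : ZMod n) = Multiplicative.ofAdd 1 ^ k := by
  rw [← ofAdd_zsmul, zsmul_one]

/-- The homomorphism from the cyclic group `ℤ/n`, written multiplicatively, that sends the
generator `1` to an element `x` with `x ^ n = 1`. -/
def zmodPowHom {G : Type*} [Group G] (x : G) (hx : x ^ n = 1) : Multiplicative (ZMod n) →* G :=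
  AddMonoidHom.toMultiplicativeLeft <| ZMod.lift n ⟨zmultiplesHom _ (Additive.ofMul x), by
    rw [zmultiplesHom_apply, natCast_zsmul, ← ofMul_pow, hx, ofMul_one]⟩

@[simp]
theorem zmodPowHom_ofAdd_one {G : Type*} [Group G] (x : G) (hx : x ^ n = 1) :
    zmodPowHom x hx (Multiplicative.ofAdd 1) = x := by
  rw [← Int.cast_one]
  simp [zmodPowHom, -Int.cast_one]

theorem monoidHom_ext_zmod {G : Type*} [Group G] {f g : Multiplicative (ZMod n) →* G}
    (h : f (Multiplicative.ofAdd 1) = g (Multiplicative.ofAdd 1)) : f = g := by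
  refine MonoidHom.ext <| Multiplicative.ofAdd.surjective.forall.2 <|
    ZMod.intCast_surjective.forall.2 fun k ↦ ?_
  rw [ofAdd_intCast_zmod, map_zpow, map_zpow, h]

theorem monoidHom_ext_zmod_prod {G : Type*} [Group G]
    {f g : Multiplicative (ZMod n) × Multiplicative (ZMod m) →* G}
    (h₁ : f (Multiplicative.ofAdd 1, 1) = g (Multiplicative.ofAdd 1, 1))
    (h₂ : f (1, Multiplicative.ofAdd 1) = g (1, Multiplicative.ofAdd 1)) : f = g := by
  have comp_inl_eq : f.comp (.inl _ _) = g.comp (.inl _ _) := monoidHom_ext_zmod h₁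
  have comp_inr_eq : f.comp (.inr _ _) = g.comp (.inr _ _) := monoidHom_ext_zmod h₂
  ext ⟨a, b⟩
  rw [← Prod.fst_mul_snd (a, b), map_mul, map_mul]
  exact congrArg₂ (· * ·) (DFunLike.congr_fun comp_inl_eq a) (DFunLike.congr_fun comp_inr_eq b)

end ZModHoms

section AbelianizedPresentation

variable {α : Type*} {rels : Set (FreeGroup α)}

theorem lift_abelianization_of_eq_one {r : FreeGroup α} (hr : r ∈ rels) :
    FreeGroup.lift (fun i ↦ Abelianization.of (PresentedGroup.of (rels := rels) i)) r = 1 := by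
  have lift_eq : FreeGroup.lift (fun i ↦ Abelianization.of (PresentedGroup.of (rels := rels) i)) =
      Abelianization.of.comp (PresentedGroup.mk rels) := by
    ext i
    simp [PresentedGroup.of]
  rw [lift_eq, MonoidHom.comp_apply, PresentedGroup.one_of_mem hr, map_one]

theorem abelianization_presentedGroup_hom_ext {A : Type*} [Group A]
    {f g : Abelianization (PresentedGroup rels) →* A}
    (h : ∀ i, f (.of (.of i)) = g (.of (.of i))) : f = g :=
  Abelianization.hom_ext f g (PresentedGroup.ext h)

end AbelianizedPresentation

section PowCommutator

variable (k m n : ℕ)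

/-- The relators of `⟨x, y ∣ x ^ k = 1, y ^ m = 1, [y, x] = x ^ n⟩`, where `x = of 0`, `y = of 1`
and `[a, b] = a⁻¹ * b⁻¹ * a * b`. -/
def powCommutatorRels : Set (FreeGroup (Fin 2)) :=
  {FreeGroup.of 0 ^ k, FreeGroup.of 1 ^ m,
   (FreeGroup.of 1)⁻¹ * (FreeGroup.of 0)⁻¹ * FreeGroup.of 1 * FreeGroup.of 0 *
     (FreeGroup.of 0 ^ n)⁻¹}

namespace powCommutatorRels

variable {k m n} in
theorem lift_eq_one_iff {A : Type*} [CommGroup A] {v : Fin 2 → A} :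
    (∀ r ∈ powCommutatorRels k m n, FreeGroup.lift v r = 1) ↔
      v 0 ^ k.gcd n = 1 ∧ v 1 ^ m = 1 := by
  have commutator_eq_one : (v 1)⁻¹ * (v 0)⁻¹ * v 1 * v 0 = 1 := by
    rw [inv_mul_cancel_comm, inv_mul_cancel]
  simp only [powCommutatorRels, Set.forall_mem_insert, Set.mem_singleton_iff, forall_eq, map_mul,
    map_inv, map_pow, FreeGroup.lift_apply_of, commutator_eq_one, one_mul, inv_eq_one,
    pow_gcd_eq_one]
  tauto

/-- The homomorphism from the abelianization to `ℤ/gcd(k, n) × ℤ/m` that sends the classes of the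
two generators to the standard generators of the factors. -/
def abelianizationToZModProd : Abelianization (PresentedGroup (powCommutatorRels k m n)) →*
    Multiplicative (ZMod (k.gcd n)) × Multiplicative (ZMod m) :=
  Abelianization.lift <| PresentedGroup.toGroup
    (f := ![(Multiplicative.ofAdd 1, 1), (1, Multiplicative.ofAdd 1)]) <|
    lift_eq_one_iff.2 <| by simp [ofAdd_one_pow_self]

/-- The homomorphism from `ℤ/gcd(k, n) × ℤ/m` to the abelianization that sends the standard
generators of the factors to the classes of the two generators. -/
def zmodProdToAbelianization : Multiplicative (ZMod (k.gcd n)) × Multiplicative (ZMod m) →*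
    Abelianization (PresentedGroup (powCommutatorRels k m n)) :=
  have pow_eq_one := lift_eq_one_iff.1 fun _ ↦ lift_abelianization_of_eq_one
  (zmodPowHom _ pow_eq_one.1).coprod (zmodPowHom _ pow_eq_one.2)

@[simp]
theorem abelianizationToZModProd_of_zero :
    abelianizationToZModProd k m n (.of (.of 0)) = (Multiplicative.ofAdd 1, 1) := by
  simp [abelianizationToZModProd]

@[simp]
theorem abelianizationToZModProd_of_one :
    abelianizationToZModProd k m n (.of (.of 1)) = (1, Multiplicative.ofAdd 1) := by
  simp [abelianizationToZModProd]

@[simp]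
theorem zmodProdToAbelianization_ofAdd_one_one :
    zmodProdToAbelianization k m n (Multiplicative.ofAdd 1, 1) = .of (.of 0) := by
  simp [zmodProdToAbelianization]

@[simp]
theorem zmodProdToAbelianization_one_ofAdd_one :
    zmodProdToAbelianization k m n (1, Multiplicative.ofAdd 1) = .of (.of 1) := by
  simp [zmodProdToAbelianization]

/-- The abelianization of `⟨x, y ∣ x ^ k = 1, y ^ m = 1, [y, x] = x ^ n⟩` as the product
`ℤ/gcd(k, n) × ℤ/m`, with `x` and `y` matching the generators of the factors. -/
def abelianizationEquivZModProd : Abelianization (PresentedGroup (powCommutatorRels k m n)) ≃*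
    Multiplicative (ZMod (k.gcd n)) × Multiplicative (ZMod m) :=
  MonoidHom.toMulEquiv (abelianizationToZModProd k m n) (zmodProdToAbelianization k m n)
    (abelianization_presentedGroup_hom_ext <| Fin.forall_fin_two.2 ⟨by simp, by simp⟩)
    (monoidHom_ext_zmod_prod (by simp) (by simp))

end powCommutatorRels

end PowCommutator

theorem stmt1_general (k m n : ℕ) :
    Nonempty (Abelianization (PresentedGroup (powCommutatorRels k m n)) ≃*
      Multiplicative (ZMod (k.gcd n) × ZMod m)) :=
  ⟨(powCommutatorRels.abelianizationEquivZModProd k m n).trans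
    (MulEquiv.prodMultiplicative _ _).symm⟩

theorem stmt1 (e : ℕ) (he : 1 ≤ e) :
    Nonempty (Abelianization (PresentedGroup (Grels e)) ≃*
      Multiplicative (ZMod (3 ^ e) × ZMod 3)) := by
  have gcd_eq : (3 ^ (e + 1)).gcd (3 ^ e) = 3 ^ e := Nat.gcd_eq_right (pow_dvd_pow 3 e.le_succ)
  exact gcd_eq ▸ stmt1_general (3 ^ (e + 1)) 3 (3 ^ e)
end

section
/- For every integer e ≥ 3 and each i ∈ {2,3}, there exists a finite metabelian σ-group G of order 3^{4+e}, generated by two elements x and y satisfying x^{3^{e+1}} = 1, y^3 = s₃, and t₃ = s₃·x^{(i-1)·3^e}, whose abelianization is isomorphic to (ZMod (3^e)) × (ZMod 3). -/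
/-- The commutator `[a,b] = a⁻¹ * b⁻¹ * a * b`. -/
def comm' {G : Type*} [Group G] (a b : G) : G := a⁻¹ * b⁻¹ * a * b

/-- `s₂ = [y,x]` and `s_j = [s_(j-1), x]` for `j ≥ 3`. -/
def sgen {G : Type*} [Group G] (x y : G) : ℕ → G
  | 0 => 1
  | 1 => 1
  | 2 => comm' y x
  | (n + 3) => comm' (sgen x y (n + 2)) x

/-- `t_j = [s_(j-1), y]` for `j ≥ 3`. -/
def tgenD {G : Type*} [Group G] (x y : G) (j : ℕ) : G := comm' (sgen x y (j - 1)) y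

/-- `t₂ = [y,x]` and `t_j = [t_(j-1), y]` for `j ≥ 3`. -/
def tgenB {G : Type*} [Group G] (x y : G) : ℕ → G
  | 0 => 1
  | 1 => 1
  | 2 => comm' y x
  | (n + 3) => comm' (tgenB x y (n + 2)) y

/-- A σ-group: a group admitting an automorphism acting as inversion on the
abelianization. -/
def IsSigmaGroup (G : Type*) [Group G] : Prop :=
  ∃ σ : G ≃* G, ∀ g : G, Abelianization.of (σ g) = (Abelianization.of g)⁻¹

/-- A group is metabelian if its commutator subgroup is abelian, i.e. the second
derived subgroup is trivial. -/
def IsMetabelian (G : Type*) [Group G] : Prop := derivedSeries G 2 = ⊥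

/-! In a group with these relations every element is a word `x ^ a * y ^ b * s₂ ^ c`, with
`s₃ = y ^ 3` and `t₃` equal to `s₃` times a power of `w`, both central. Collecting a product of two
such words produces new central factors `s₃` and `t₃`, whose exponents are polynomials over
`ZMod 3` in the exponents of the two words modulo 3. We use these polynomials to define the
multiplication on triples of exponents. Then `s₂`, `s₃` and `t₃` generate the kernel of
`(a, b, c) ↦ (a mod 3 ^ e, b mod 3)`, which is therefore the commutator subgroup, and
`x ↦ x⁻¹`, `y ↦ y⁻¹` extends to an automorphism. -/

section CommutatorSubgroup

variable {G : Type*} [Group G]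

theorem comm'_eq_iff {g h z : G} : comm' g h = z ↔ g * h = h * g * z := by
  rw [← inv_mul_eq_iff_eq_mul, comm', mul_inv_rev, mul_assoc]

theorem comm'_mem_commutator (g h : G) : comm' g h ∈ commutator G := by
  simpa [comm', commutatorElement_def, commutator_def] using
    Subgroup.commutator_mem_commutator (Subgroup.mem_top g⁻¹) (Subgroup.mem_top h⁻¹)

variable {A : Type*} [CommGroup A] (f : G →* A)

theorem isMetabelian_of_commute_ker (hf : ∀ g ∈ f.ker, ∀ h ∈ f.ker, Commute g h) :
    IsMetabelian G := by
  have hle : commutator G ≤ f.ker := Abelianization.commutator_subset_ker f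
  rw [IsMetabelian, derivedSeries_succ, derivedSeries_one,
    Subgroup.commutator_eq_bot_iff_le_centralizer]
  exact fun g hg ↦ Subgroup.mem_centralizer_iff.2 fun h hh ↦ hf h (hle hh) g (hle hg)

variable {f}

theorem isSigmaGroup_of_ker_le_commutator (hf : f.ker ≤ commutator G) (σ : G ≃* G)
    (hσ : ∀ g, f (σ g) = (f g)⁻¹) : IsSigmaGroup G := by
  refine ⟨σ, fun g ↦ eq_inv_of_mul_eq_one_left ?_⟩
  rw [← map_mul, ← MonoidHom.mem_ker, Abelianization.ker_of]
  exact hf (by simp [MonoidHom.mem_ker, hσ])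

theorem nonempty_abelianization_mulEquiv (hf : f.ker ≤ commutator G)
    (hsurj : Function.Surjective f) : Nonempty (Abelianization G ≃* A) :=
  have hker : commutator G = f.ker := (Abelianization.commutator_subset_ker f).antisymm hf
  ⟨(QuotientGroup.quotientMulEquivOfEq hker).trans
    (QuotientGroup.quotientKerEquivOfSurjective f hsurj)⟩

end CommutatorSubgroup

theorem zmultiples_one_zmod_eq_top (n : ℕ) : AddSubgroup.zmultiples (1 : ZMod n) = ⊤ := by
  refine (AddSubgroup.eq_top_iff' _).2 fun a ↦ ?_
  obtain ⟨k, rfl⟩ := ZMod.intCast_surjective a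
  exact AddSubgroup.mem_zmultiples_iff.2 ⟨k, zsmul_one k⟩

/-- An abelian group `A` with a map `bottom` from `ZMod 3` into it and a map `top` from it to
`ZMod 3`, composing to zero. It is the group of exponents of a generator: collection reads these
exponents only through `top` and changes them only through `bottom`. -/
structure Layers (A : Type*) [AddCommGroup A] where
  bottom : ZMod 3 →+ A
  top : A →+ ZMod 3
  top_bottom (z : ZMod 3) : top (bottom z) = 0

attribute [simp] Layers.top_bottom

namespace Layers

variable {d : ℕ}

/-- The layers of `ZMod (3 * d)` in which `bottom` is multiplication by `n * d` and `top` is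
reduction modulo 3. -/
def zmod (hd : 3 ∣ d) (n : ℕ) : Layers (ZMod (3 * d)) where
  bottom := ZMod.lift 3 ⟨zmultiplesHom _ ((n * d : ℕ) : ZMod (3 * d)), by
    rw [zmultiplesHom_apply, natCast_zsmul, nsmul_eq_mul, ← Nat.cast_mul,
      ZMod.natCast_eq_zero_iff]
    exact ⟨n, by ring⟩⟩
  top := (ZMod.castHom (dvd_mul_right 3 d) (ZMod 3)).toAddMonoidHom
  top_bottom z := by
    obtain ⟨m, rfl⟩ := ZMod.intCast_surjective z
    have hd0 : (d : ZMod 3) = 0 := (ZMod.natCast_eq_zero_iff d 3).2 hd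
    simp [hd0]

theorem zmod_bottom_natCast (hd : 3 ∣ d) (n m : ℕ) :
    (zmod hd n).bottom m = (m * (n * d) : ℕ) := by
  rw [← Int.cast_natCast m, zmod, ZMod.lift_coe]
  simp

@[simp]
theorem zmod_bottom_one (hd : 3 ∣ d) (n : ℕ) : (zmod hd n).bottom 1 = (n * d : ℕ) := by
  simpa using zmod_bottom_natCast hd n 1

@[simp]
theorem zmod_top_one (hd : 3 ∣ d) (n : ℕ) : (zmod hd n).top 1 = 1 :=
  map_one (ZMod.castHom (dvd_mul_right 3 d) (ZMod 3))

/-- Reduction modulo `d`, the quotient map of `ZMod (3 * d)` by its bottom layer. -/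
def reduce (d : ℕ) : ZMod (3 * d) →+ ZMod d :=
  (ZMod.castHom (dvd_mul_left d 3) (ZMod d)).toAddMonoidHom

theorem reduce_surjective (d : ℕ) : Function.Surjective (reduce d) :=
  ZMod.castHom_surjective (dvd_mul_left d 3)

theorem reduce_natCast_eq_zero_iff (k : ℕ) : reduce d k = 0 ↔ d ∣ k := by
  simp [reduce, ZMod.natCast_eq_zero_iff]

theorem exact_zmod_bottom_reduce [NeZero d] (hd : 3 ∣ d) {n : ℕ} (hn : ¬ 3 ∣ n) :
    Function.Exact (zmod hd n).bottom (reduce d) := by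
  intro a
  obtain ⟨k, rfl⟩ := ZMod.natCast_zmod_surjective a
  rw [reduce_natCast_eq_zero_iff]
  constructor
  · rintro ⟨c, rfl⟩
    have hnn : n * n ≡ 1 [MOD 3] := by
      rcases (by lia : n % 3 = 1 ∨ n % 3 = 2) with h | h <;> simp [Nat.ModEq, Nat.mul_mod, h]
    have hcnn : c * n * n ≡ c [MOD 3] := by simpa [mul_assoc] using hnn.mul_left c
    refine ⟨(c * n : ℕ), ?_⟩
    rw [zmod_bottom_natCast, ZMod.natCast_eq_natCast_iff, mul_comm d c, ← mul_assoc]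
    exact hcnn.mul_right' d
  · rintro ⟨z, hz⟩
    obtain ⟨m, rfl⟩ := ZMod.natCast_zmod_surjective z
    rw [← reduce_natCast_eq_zero_iff, ← hz, zmod_bottom_natCast, reduce_natCast_eq_zero_iff]
    exact dvd_mul_of_dvd_right (dvd_mul_left d n) m

end Layers

variable {A B : Type*} [AddCommGroup A] [AddCommGroup B]

/-- The group of collected words `x ^ a * y ^ b * s₂ ^ c`, encoded by the exponents `a`, `b`
and `c`. The central elements are `s₃ = y ^ β.bottom 1` and `t₃ = s₃ * x ^ α.bottom 1`. -/
@[ext]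
structure CollectedGroup (α : Layers A) (β : Layers B) where
  a : A
  b : B
  c : ZMod 3

namespace CollectedGroup

variable {α : Layers A} {β : Layers B}

section Multiplication

/-- The exponent of `s₃` produced by collecting the product of `g` and `h`. -/
def sExponent (g h : CollectedGroup α β) : ZMod 3 :=
  -- `p - p ^ 2` is the binomial coefficient `p.choose 2` modulo 3
  β.top g.b * (α.top h.a - α.top h.a ^ 2) + g.c * α.top h.a

/-- The exponent of `t₃` produced by collecting the product of `g` and `h`. -/
def tExponent (g h : CollectedGroup α β) : ZMod 3 :=
  α.top h.a * (β.top g.b - β.top g.b ^ 2) + α.top h.a * β.top g.b * β.top h.b + g.c * β.top h.b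

instance : Mul (CollectedGroup α β) where
  mul g h :=
    ⟨g.a + h.a + α.bottom (tExponent g h),
      g.b + h.b + β.bottom (sExponent g h + tExponent g h),
      g.c + h.c + α.top h.a * β.top g.b⟩

instance : One (CollectedGroup α β) := ⟨⟨0, 0, 0⟩⟩

instance : Inv (CollectedGroup α β) where
  inv g :=
    -- inverse to `g` modulo `s₃` and `t₃`
    let r : CollectedGroup α β := ⟨-g.a, -g.b, -g.c + α.top g.a * β.top g.b⟩
    ⟨r.a - α.bottom (tExponent r g), r.b - β.bottom (sExponent r g + tExponent r g), r.c⟩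

variable (g h k : CollectedGroup α β)

@[simp]
theorem mul_a : (g * h).a = g.a + h.a + α.bottom (tExponent g h) := rfl

@[simp]
theorem mul_b : (g * h).b = g.b + h.b + β.bottom (sExponent g h + tExponent g h) := rfl

@[simp]
theorem mul_c : (g * h).c = g.c + h.c + α.top h.a * β.top g.b := rfl

@[simp]
theorem one_a : (1 : CollectedGroup α β).a = 0 := rfl

@[simp]
theorem one_b : (1 : CollectedGroup α β).b = 0 := rfl

@[simp]
theorem one_c : (1 : CollectedGroup α β).c = 0 := rfl

theorem tExponent_cocycle :
    tExponent g h + tExponent (g * h) k = tExponent h k + tExponent g (h * k) := by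
  simp only [tExponent, mul_a, mul_b, mul_c, map_add, Layers.top_bottom, add_zero]
  grind

theorem sExponent_cocycle :
    sExponent g h + sExponent (g * h) k = sExponent h k + sExponent g (h * k) := by
  simp only [sExponent, mul_a, mul_b, mul_c, map_add, Layers.top_bottom, add_zero]
  grind

protected theorem mul_assoc : g * h * k = g * (h * k) := by
  have ht := tExponent_cocycle g h k
  have hs := sExponent_cocycle g h k
  ext
  · have hα := congrArg α.bottom ht
    simp only [map_add] at hα
    simp only [mul_a]
    grind
  · have hβ := congrArg β.bottom (congrArg₂ (· + ·) hs ht)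
    simp only [map_add] at hβ
    simp only [mul_b, map_add]
    grind
  · simp only [mul_a, mul_b, mul_c, map_add, Layers.top_bottom, add_zero]
    ring

protected theorem one_mul : 1 * g = g := by
  ext <;> simp [sExponent, tExponent]

protected theorem inv_mul_cancel : g⁻¹ * g = 1 := by
  ext
  · simp only [Inv.inv, mul_a, one_a, tExponent, map_sub, Layers.top_bottom, sub_zero]
    abel
  · simp only [Inv.inv, mul_b, one_b, sExponent, tExponent, map_sub, Layers.top_bottom, sub_zero]
    abel
  · simp only [Inv.inv, mul_c, one_c, map_sub, map_neg, Layers.top_bottom]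
    ring

instance : Group (CollectedGroup α β) :=
  Group.ofLeftAxioms CollectedGroup.mul_assoc CollectedGroup.one_mul
    CollectedGroup.inv_mul_cancel

end Multiplication

section Card

variable (α β)

/-- A collected word as its triple of exponents. -/
def exponentEquiv : CollectedGroup α β ≃ A × B × ZMod 3 where
  toFun g := (g.a, g.b, g.c)
  invFun t := ⟨t.1, t.2.1, t.2.2⟩

instance [Finite A] [Finite B] : Finite (CollectedGroup α β) :=
  .of_equiv _ (exponentEquiv α β).symm

theorem nat_card : Nat.card (CollectedGroup α β) = Nat.card A * Nat.card B * 3 := by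
  rw [Nat.card_congr (exponentEquiv α β)]
  simp [mul_assoc]

end Card

section Generators

variable (α β)

/-- The powers of the generator `x`, with exponents in `A`. -/
def xPow : Multiplicative A →* CollectedGroup α β where
  toFun a := ⟨a.toAdd, 0, 0⟩
  map_one' := rfl
  map_mul' a a' := by ext <;> simp [sExponent, tExponent]

/-- The powers of the generator `y`, with exponents in `B`. -/
def yPow : Multiplicative B →* CollectedGroup α β where
  toFun b := ⟨0, b.toAdd, 0⟩
  map_one' := rfl
  map_mul' b b' := by ext <;> simp [sExponent, tExponent]

/-- The powers of `s₂`. -/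
def sPow : Multiplicative (ZMod 3) →* CollectedGroup α β where
  toFun c := ⟨0, 0, c.toAdd⟩
  map_one' := rfl
  map_mul' c c' := by ext <;> simp [sExponent, tExponent]

theorem eq_xPow_mul_yPow_mul_sPow (g : CollectedGroup α β) :
    g = xPow α β (.ofAdd g.a) * yPow α β (.ofAdd g.b) * sPow α β (.ofAdd g.c) := by
  ext <;> simp [xPow, yPow, sPow, sExponent, tExponent]

variable {α β} {x : A} {y : B}

theorem comm'_yPow_xPow (hx : α.top x = 1) (hy : β.top y = 1) :
    comm' (yPow α β (.ofAdd y)) (xPow α β (.ofAdd x)) = sPow α β (.ofAdd 1) := by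
  rw [comm'_eq_iff]
  ext <;> simp [xPow, yPow, sPow, sExponent, tExponent, hx, hy]

theorem comm'_sPow_xPow (hx : α.top x = 1) (z : ZMod 3) :
    comm' (sPow α β (.ofAdd z)) (xPow α β (.ofAdd x)) = yPow α β (.ofAdd (β.bottom z)) := by
  rw [comm'_eq_iff]
  ext <;> simp [xPow, yPow, sPow, sExponent, tExponent, hx]

theorem comm'_sPow_yPow (hy : β.top y = 1) (z : ZMod 3) :
    comm' (sPow α β (.ofAdd z)) (yPow α β (.ofAdd y)) =
      yPow α β (.ofAdd (β.bottom z)) * xPow α β (.ofAdd (α.bottom z)) := by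
  rw [comm'_eq_iff]
  ext <;> simp [xPow, yPow, sPow, sExponent, tExponent, hy]

theorem sgen_three (hx : α.top x = 1) (hy : β.top y = 1) :
    sgen (xPow α β (.ofAdd x)) (yPow α β (.ofAdd y)) 3 = yPow α β (.ofAdd (β.bottom 1)) := by
  rw [sgen, sgen, comm'_yPow_xPow hx hy, comm'_sPow_xPow hx]

theorem tgenD_three (hx : α.top x = 1) (hy : β.top y = 1) :
    tgenD (xPow α β (.ofAdd x)) (yPow α β (.ofAdd y)) 3 =
      yPow α β (.ofAdd (β.bottom 1)) * xPow α β (.ofAdd (α.bottom 1)) := by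
  rw [tgenD, sgen, comm'_yPow_xPow hx hy, comm'_sPow_yPow hy]

theorem sPow_mem {H : Subgroup (CollectedGroup α β)} (h : sPow α β (.ofAdd 1) ∈ H) (z : ZMod 3) :
    sPow α β (.ofAdd z) ∈ H := by
  have hz : Multiplicative.ofAdd z = Multiplicative.ofAdd 1 ^ z.val := by simp [← ofAdd_nsmul]
  rw [hz, map_pow]
  exact pow_mem h _

theorem closure_xPow_yPow (hx : α.top x = 1) (hy : β.top y = 1)
    (hxA : AddSubgroup.zmultiples x = ⊤) (hyB : AddSubgroup.zmultiples y = ⊤) :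
    Subgroup.closure {xPow α β (.ofAdd x), yPow α β (.ofAdd y)} = ⊤ := by
  set H := Subgroup.closure {xPow α β (.ofAdd x), yPow α β (.ofAdd y)}
  have hxH : xPow α β (.ofAdd x) ∈ H := Subgroup.subset_closure (by simp)
  have hyH : yPow α β (.ofAdd y) ∈ H := Subgroup.subset_closure (by simp)
  have hsH : sPow α β (.ofAdd 1) ∈ H := by
    rw [← comm'_yPow_xPow hx hy]
    exact mul_mem (mul_mem (mul_mem (inv_mem hyH) (inv_mem hxH)) hyH) hxH
  refine (Subgroup.eq_top_iff' H).2 fun g ↦ ?_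
  obtain ⟨m, hm⟩ := AddSubgroup.mem_zmultiples_iff.1 (hxA ▸ AddSubgroup.mem_top g.a)
  obtain ⟨n, hn⟩ := AddSubgroup.mem_zmultiples_iff.1 (hyB ▸ AddSubgroup.mem_top g.b)
  rw [eq_xPow_mul_yPow_mul_sPow α β g, ← hm, ← hn, ofAdd_zsmul, ofAdd_zsmul, map_zpow, map_zpow]
  exact mul_mem (mul_mem (zpow_mem hxH m) (zpow_mem hyH n)) (sPow_mem hsH g.c)

end Generators

section AbelianQuotient

variable {C D : Type*} [AddCommGroup C] [AddCommGroup D] {φ : A →+ C} {ψ : B →+ D}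

/-- The homomorphism to `C × D` which forgets the exponent of `s₂` and applies `φ` and `ψ` to
those of `x` and `y`. -/
def toProd (hφ : ∀ z, φ (α.bottom z) = 0) (hψ : ∀ z, ψ (β.bottom z) = 0) :
    CollectedGroup α β →* Multiplicative (C × D) where
  toFun g := .ofAdd (φ g.a, ψ g.b)
  map_one' := by simp
  map_mul' g h := by
    rw [← ofAdd_add]
    simp [hφ, hψ]

variable {hφ : ∀ z, φ (α.bottom z) = 0} {hψ : ∀ z, ψ (β.bottom z) = 0}

theorem toProd_apply (g : CollectedGroup α β) : toProd hφ hψ g = .ofAdd (φ g.a, ψ g.b) :=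
  rfl

theorem mem_ker_toProd {g : CollectedGroup α β} :
    g ∈ (toProd hφ hψ).ker ↔ φ g.a = 0 ∧ ψ g.b = 0 :=
  MonoidHom.mem_ker.trans Prod.ext_iff

theorem toProd_surjective (hφ_surj : Function.Surjective φ) (hψ_surj : Function.Surjective ψ) :
    Function.Surjective (toProd hφ hψ) := by
  rintro ⟨u, v⟩
  obtain ⟨a, rfl⟩ := hφ_surj u
  obtain ⟨b, rfl⟩ := hψ_surj v
  exact ⟨⟨a, b, 0⟩, rfl⟩

theorem isMetabelian : IsMetabelian (CollectedGroup α β) := by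
  refine isMetabelian_of_commute_ker (toProd α.top_bottom β.top_bottom) fun g hg h hh ↦ ?_
  obtain ⟨hga, hgb⟩ := mem_ker_toProd.1 hg
  obtain ⟨hha, hhb⟩ := mem_ker_toProd.1 hh
  ext <;> simp [sExponent, tExponent, hga, hgb, hha, hhb, add_comm]

variable {x : A} {y : B}

theorem mk_bottom_mem_commutator (hx : α.top x = 1) (hy : β.top y = 1) (u v c : ZMod 3) :
    (⟨α.bottom u, β.bottom v, c⟩ : CollectedGroup α β) ∈ commutator (CollectedGroup α β) := by
  have hs : sPow α β (.ofAdd 1) ∈ commutator (CollectedGroup α β) := by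
    rw [← comm'_yPow_xPow hx hy]
    exact comm'_mem_commutator _ _
  have hyPow (z : ZMod 3) :
      yPow α β (.ofAdd (β.bottom z)) ∈ commutator (CollectedGroup α β) := by
    rw [← comm'_sPow_xPow hx]
    exact comm'_mem_commutator _ _
  have hxPow (z : ZMod 3) :
      xPow α β (.ofAdd (α.bottom z)) ∈ commutator (CollectedGroup α β) := by
    rw [← Subgroup.mul_mem_cancel_left _ (hyPow z), ← comm'_sPow_yPow hy]
    exact comm'_mem_commutator _ _
  rw [eq_xPow_mul_yPow_mul_sPow α β ⟨_, _, _⟩]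
  exact mul_mem (mul_mem (hxPow u) (hyPow v)) (sPow_mem hs c)

theorem ker_toProd_le_commutator (hx : α.top x = 1) (hy : β.top y = 1)
    (hφ : Function.Exact α.bottom φ) (hψ : Function.Exact β.bottom ψ) :
    (toProd hφ.apply_apply_eq_zero hψ.apply_apply_eq_zero).ker ≤
      commutator (CollectedGroup α β) := by
  rintro ⟨a, b, c⟩ hg
  obtain ⟨ha, hb⟩ := mem_ker_toProd.1 hg
  obtain ⟨u, rfl⟩ := (hφ a).1 ha
  obtain ⟨v, rfl⟩ := (hψ b).1 hb
  exact mk_bottom_mem_commutator hx hy u v c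

end AbelianQuotient

section Inversion

/-- The map extending `x ↦ x⁻¹` and `y ↦ y⁻¹` to a homomorphism. -/
@[simps]
def invert (g : CollectedGroup α β) : CollectedGroup α β :=
  ⟨-g.a - α.bottom g.c, -g.b + β.bottom g.c, g.c⟩

theorem tExponent_invert (g h : CollectedGroup α β) :
    tExponent (invert g) (invert h) + tExponent g h = -(α.top h.a * β.top g.b) := by
  simp only [tExponent, invert_a, invert_b, invert_c, map_add, map_sub, map_neg, Layers.top_bottom]
  grind

theorem sExponent_invert (g h : CollectedGroup α β) :
    sExponent (invert g) (invert h) + sExponent g h = -(α.top h.a * β.top g.b) := by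
  simp only [sExponent, invert_a, invert_b, invert_c, map_add, map_sub, map_neg, Layers.top_bottom]
  grind

theorem invert_mul (g h : CollectedGroup α β) : invert (g * h) = invert g * invert h := by
  have ht := tExponent_invert g h
  have hs := sExponent_invert g h
  ext
  · have hα := congrArg α.bottom ht
    simp only [map_add, map_neg] at hα
    simp only [mul_a, mul_c, invert_a, map_add]
    grind
  · have hst : sExponent (invert g) (invert h) + tExponent (invert g) (invert h) +
        (sExponent g h + tExponent g h) = α.top h.a * β.top g.b := by grind
    have hβ := congrArg β.bottom hst
    simp only [map_add] at hβ
    simp only [mul_b, mul_c, invert_b, map_add]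
    grind
  · simp

theorem invert_invert (g : CollectedGroup α β) : invert (invert g) = g := by
  ext <;> simp

/-- The automorphism inverting `x` and `y`. -/
@[simps]
def inversion : CollectedGroup α β ≃* CollectedGroup α β where
  toFun := invert
  invFun := invert
  left_inv := invert_invert
  right_inv := invert_invert
  map_mul' := invert_mul

variable {C D : Type*} [AddCommGroup C] [AddCommGroup D] {φ : A →+ C} {ψ : B →+ D}

theorem isSigmaGroup {x : A} {y : B} (hx : α.top x = 1) (hy : β.top y = 1)
    (hφ : Function.Exact α.bottom φ) (hψ : Function.Exact β.bottom ψ) :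
    IsSigmaGroup (CollectedGroup α β) := by
  refine isSigmaGroup_of_ker_le_commutator (ker_toProd_le_commutator hx hy hφ hψ) inversion
    fun g ↦ ?_
  rw [toProd_apply, toProd_apply, ← ofAdd_neg]
  simp [hφ.apply_apply_eq_zero, hψ.apply_apply_eq_zero]

end Inversion

end CollectedGroup

open CollectedGroup in
theorem stmt5_general (e n : ℕ) (he : 1 ≤ e) (hn : ¬ 3 ∣ n) :
    ∃ (G : Type) (_ : Group G) (_ : Finite G) (x y : G),
      Subgroup.closure {x, y} = ⊤ ∧
      Nat.card G = 3 ^ (4 + e) ∧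
      IsMetabelian G ∧
      IsSigmaGroup G ∧
      x ^ 3 ^ (e + 1) = 1 ∧
      y ^ 3 = sgen x y 3 ∧
      tgenD x y 3 = sgen x y 3 * x ^ (n * 3 ^ e) ∧
      Nonempty (Abelianization G ≃* Multiplicative (ZMod (3 ^ e) × ZMod 3)) := by
  have hd : 3 ∣ 3 ^ e := dvd_pow_self 3 (by lia)
  let α := Layers.zmod hd n
  let β := Layers.zmod (dvd_refl 3) 1
  have hx : α.top 1 = 1 := Layers.zmod_top_one hd n
  have hy : β.top 1 = 1 := Layers.zmod_top_one (dvd_refl 3) 1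
  have hα := Layers.exact_zmod_bottom_reduce hd hn
  have hβ := Layers.exact_zmod_bottom_reduce (dvd_refl 3) (n := 1) (by decide)
  refine ⟨CollectedGroup α β, inferInstance, inferInstance, xPow α β (.ofAdd 1),
    yPow α β (.ofAdd 1),
    closure_xPow_yPow hx hy (zmultiples_one_zmod_eq_top _) (zmultiples_one_zmod_eq_top _),
    ?_, isMetabelian, isSigmaGroup hx hy hα hβ, ?_, ?_, ?_,
    nonempty_abelianization_mulEquiv (ker_toProd_le_commutator hx hy hα hβ)
      (toProd_surjective (Layers.reduce_surjective _) (Layers.reduce_surjective _))⟩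
  · rw [nat_card, Nat.card_zmod, Nat.card_zmod]
    ring
  · rw [← map_pow, ← ofAdd_nsmul, nsmul_one, pow_succ', ZMod.natCast_self, ofAdd_zero, map_one]
  · rw [sgen_three hx hy, ← map_pow, ← ofAdd_nsmul, nsmul_one, Layers.zmod_bottom_one, one_mul]
  · rw [tgenD_three hx hy, sgen_three hx hy, ← map_pow, ← ofAdd_nsmul, nsmul_one,
      Layers.zmod_bottom_one hd]

theorem stmt5 (e i : ℕ) (he : 3 ≤ e) (hi : i = 2 ∨ i = 3) :
    ∃ (G : Type) (_ : Group G) (_ : Finite G) (x y : G),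
      Subgroup.closure {x, y} = ⊤ ∧
      Nat.card G = 3 ^ (4 + e) ∧
      IsMetabelian G ∧
      IsSigmaGroup G ∧
      x ^ 3 ^ (e + 1) = 1 ∧
      y ^ 3 = sgen x y 3 ∧
      tgenD x y 3 = sgen x y 3 * x ^ ((i - 1) * 3 ^ e) ∧
      Nonempty (Abelianization G ≃* Multiplicative (ZMod (3 ^ e) × ZMod 3)) :=
  stmt5_general e (i - 1) (by lia) (by lia)
end
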